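/- Let G be a finite group and M ≤ G a quasi-simple subgroup. Let y be an element of the normalizer N_G(M) which does not centralize M, and let K be the subgroup of G generated by M ∪ {y}. Then the subgroup of G generated by the conjugation orbit O_y^K is equal to K, and O_y^K has at least 3 elements. -/

import Mathlib

/-- The orbit of `g` under conjugation by the subgroup `H` of `G`. -/
def convOrbit {G : Type*} [Group G] (H : Subgroup G) (g : G) : Set G :=
  (fun h => h * g * h⁻¹) '' (H : Set G)

/-- A group is quasi-simple if it is nontrivial, perfect, and its central quotient is simple. -/
def IsQuasiSimple (M : Type*) [Group M] : Prop :=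
  Nontrivial M ∧ commutator M = ⊤ ∧ IsSimpleGroup (M ⧸ Subgroup.center M)

/-!
Let `N` be the subgroup generated by the orbit `O_y^M`. The subgroups `M` and `N` normalize each
other, so `M ∩ N` is normal in `M` and contains `⁅M, N⁆`. A normal subgroup of a quasi-simple group
is central or everything. If `M ∩ N` were central in `M`, then `⁅⁅M, N⁆, M⁆ = 1`, and the three
subgroups lemma would give `⁅M, N⁆ = ⁅⁅M, M⁆, N⁆ = 1`, although `y ∈ N` does not centralize `M`.
Hence `M ≤ N`. The orbit has at least three elements already under `M`, since a perfect group has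
no subgroup of index two.
-/

open Subgroup Group

section Perfect

variable {G : Type*} [Group G]

theorem index_ne_two_of_isPerfect [IsPerfect G] (H : Subgroup G) : H.index ≠ 2 := by
  intro hindex
  have : H.Normal := normal_of_index_eq_two hindex
  have : IsCyclic (G ⧸ H) := isCyclic_of_prime_card (p := 2) hindex
  have hle : commutator G ≤ H :=
    Normal.quotient_commutative_iff_commutator_le.mp IsCyclic.isMulCommutative
  rw [IsPerfect.commutator_eq_top, top_le_iff] at hle
  simp [hle] at hindex

theorem three_le_encard_orbit_of_isPerfect [IsPerfect G] {X : Type*} [MulAction G X] {x : X}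
    (hx : x ∉ MulAction.fixedPoints G X) : 3 ≤ (MulAction.orbit G x).encard := by
  by_contra! hlt
  have hfin : (MulAction.orbit G x).Finite := Set.encard_lt_top_iff.mp (hlt.trans (by decide))
  have hcard_lt : (MulAction.orbit G x).ncard < 3 := by
    rwa [← hfin.cast_ncard_eq, Nat.cast_lt_ofNat] at hlt
  have hcard_pos : 0 < (MulAction.orbit G x).ncard :=
    (Set.ncard_pos hfin).mpr (MulAction.nonempty_orbit x)
  have hindex_ne_one : (MulAction.stabilizer G x).index ≠ 1 := fun h ↦
    hx fun g ↦ MulAction.mem_stabilizer_iff.mp (index_eq_one.mp h ▸ mem_top g)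
  have hindex_ne_two := index_ne_two_of_isPerfect (MulAction.stabilizer G x)
  rw [MulAction.index_stabilizer] at hindex_ne_one hindex_ne_two
  omega

theorem le_centralizer_of_commutator_le_centralizer {M N : Subgroup G} [IsPerfect M]
    (h : ⁅M, N⁆ ≤ centralizer M) : N ≤ centralizer M := by
  have hMN : ⁅⁅M, N⁆, M⁆ = ⊥ := commutator_eq_bot_iff_le_centralizer.mpr h
  have hNM : ⁅⁅N, M⁆, M⁆ = ⊥ := by rwa [commutator_comm N M]
  have hMM : ⁅⁅M, M⁆, N⁆ = ⊥ := commutator_commutator_eq_bot_of_rotate hMN hNM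
  rwa [commutator_eq_self, commutator_comm, commutator_eq_bot_iff_le_centralizer] at hMM

end Perfect

namespace IsQuasiSimple

theorem isPerfect {M : Type*} [Group M] (hM : IsQuasiSimple M) : IsPerfect M :=
  ⟨hM.2.1⟩

theorem le_center_or_eq_top {M : Type*} [Group M] (hM : IsQuasiSimple M) (B : Subgroup M)
    [hB : B.Normal] : B ≤ center M ∨ B = ⊤ := by
  have := hM.2.2
  have hmap : (B.map (QuotientGroup.mk' (center M))).Normal :=
    hB.map _ (QuotientGroup.mk'_surjective _)
  refine hmap.eq_bot_or_eq_top.imp (fun hbot ↦ ?_) fun htop ↦ ?_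
  · rwa [Subgroup.map_eq_bot_iff, QuotientGroup.ker_mk'] at hbot
  · have hsup : B ⊔ center M = ⊤ := by
      rw [← QuotientGroup.ker_mk' (center M), ← comap_map_eq, htop, comap_top]
    have hle : commutator M ≤ B :=
      Normal.commutator_le_of_self_sup_commutative_eq_top hsup inferInstance
    rwa [hM.2.1, top_le_iff] at hle

variable {G : Type*} [Group G] {M : Subgroup G}

theorem le_or_le_centralizer (hM : IsQuasiSimple M) {N : Subgroup G}
    (hMN : M ≤ normalizer (N : Set G)) (hNM : N ≤ normalizer (M : Set G)) :
    M ≤ N ∨ N ≤ centralizer (M : Set G) := by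
  have := hM.isPerfect
  have : (N.subgroupOf M).Normal := normal_subgroupOf_of_le_normalizer hMN
  refine (hM.le_center_or_eq_top (N.subgroupOf M)).symm.imp subgroupOf_eq_top.mp fun hcenter ↦ ?_
  apply le_centralizer_of_commutator_le_centralizer
  intro x hx
  have hxM : x ∈ M := le_normalizer_iff_commutator_le_left.mp hNM hx
  have hxN : x ∈ N := le_normalizer_iff_commutator_le_right.mp hMN hx
  have hx_center : ⟨x, hxM⟩ ∈ center M := hcenter (mem_subgroupOf.mpr hxN)
  exact fun m hm ↦ congrArg Subtype.val (mem_center_iff.mp hx_center ⟨m, hm⟩)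

end IsQuasiSimple

section ConvOrbit

variable {G : Type*} [Group G] {H K : Subgroup G} {g : G}

theorem mem_convOrbit_self (H : Subgroup G) (g : G) : g ∈ convOrbit H g :=
  ⟨1, H.one_mem, by simp⟩

theorem convOrbit_mono (h : H ≤ K) (g : G) : convOrbit H g ⊆ convOrbit K g :=
  Set.image_mono h

theorem closure_convOrbit_le (hH : H ≤ K) (hg : g ∈ K) : closure (convOrbit H g) ≤ K := by
  rw [closure_le]
  rintro _ ⟨h, hh, rfl⟩
  exact K.mul_mem (K.mul_mem (hH hh) hg) (K.inv_mem (hH hh))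

theorem le_normalizer_convOrbit (H : Subgroup G) (g : G) : H ≤ normalizer (convOrbit H g) := by
  rw [le_set_normalizer_iff]
  rintro k hk _ ⟨h, hh, rfl⟩
  exact ⟨k * h, H.mul_mem hk hh, by group⟩

theorem three_le_encard_convOrbit [IsPerfect H] (hg : g ∉ centralizer (H : Set G)) :
    3 ≤ (convOrbit H g).encard := by
  let _ : MulAction H G := MulAction.compHom G (MulAut.conj.comp H.subtype)
  have horbit : MulAction.orbit H g = convOrbit H g :=
    (Set.image_eq_range (fun h ↦ h * g * h⁻¹) (H : Set G)).symm
  rw [← horbit]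
  refine three_le_encard_orbit_of_isPerfect fun hfixed ↦ hg fun h hh ↦ ?_
  exact mul_inv_eq_iff_eq_mul.mp (hfixed ⟨h, hh⟩)

theorem IsQuasiSimple.le_closure_convOrbit {M : Subgroup G} (hM : IsQuasiSimple M)
    (hg : g ∈ normalizer (M : Set G)) (hgc : g ∉ centralizer (M : Set G)) :
    M ≤ closure (convOrbit M g) := by
  have hM_le : M ≤ normalizer (closure (convOrbit M g) : Set G) :=
    (le_normalizer_convOrbit M g).trans (normalizer_le_normalizer_closure _)
  have hle_normalizer : closure (convOrbit M g) ≤ normalizer (M : Set G) :=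
    closure_convOrbit_le le_normalizer hg
  exact (hM.le_or_le_centralizer hM_le hle_normalizer).resolve_right fun hle ↦
    hgc (hle (subset_closure (mem_convOrbit_self M g)))

end ConvOrbit

theorem stmt3_general {G : Type*} [Group G] (M : Subgroup G) (hQS : IsQuasiSimple M)
    (y : G) (hy : y ∈ normalizer (M : Set G)) (hyc : ∃ m ∈ M, y * m ≠ m * y) :
    closure (convOrbit (closure ((M : Set G) ∪ {y})) y) = closure ((M : Set G) ∪ {y}) ∧
    3 ≤ (convOrbit (closure ((M : Set G) ∪ {y})) y).encard := by
  have := hQS.isPerfect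
  have hy_centralizer : y ∉ centralizer (M : Set G) := fun h ↦
    hyc.elim fun m ⟨hm, hne⟩ ↦ hne (h m hm).symm
  set K := closure ((M : Set G) ∪ {y})
  have hMK : M ≤ K := fun m hm ↦ subset_closure (Or.inl hm)
  have hyK : y ∈ K := subset_closure (Or.inr rfl)
  have horbit : convOrbit M y ⊆ convOrbit K y := convOrbit_mono hMK y
  refine ⟨le_antisymm (closure_convOrbit_le le_rfl hyK) ?_,
    (three_le_encard_convOrbit hy_centralizer).trans (Set.encard_le_encard horbit)⟩
  refine (closure_le _).mpr (Set.union_subset ?_ ?_)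
  · exact (hQS.le_closure_convOrbit hy hy_centralizer).trans (closure_mono horbit)
  · exact Set.singleton_subset_iff.mpr (subset_closure (mem_convOrbit_self K y))

/-- Lemma: if `M ≤ G` is quasi-simple and `y ∈ N_G(M)` does not centralize `M`,
then, with `K = ⟨M ∪ {y}⟩`, the subgroup generated by the conjugation orbit `O_y^K`
equals `K`, and `O_y^K` has at least three elements. -/
theorem stmt3 {G : Type*} [Group G] [Finite G] (M : Subgroup G)
    (hQS : IsQuasiSimple M)
    (y : G) (hy : y ∈ Subgroup.normalizer (M : Set G)) (hyc : ∃ m ∈ M, y * m ≠ m * y) :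
    Subgroup.closure (convOrbit (Subgroup.closure ((M : Set G) ∪ {y})) y) =
      Subgroup.closure ((M : Set G) ∪ {y}) ∧
    3 ≤ (convOrbit (Subgroup.closure ((M : Set G) ∪ {y})) y).ncard := by
  obtain ⟨hclosure, hcard⟩ := stmt3_general M hQS y hy hyc
  exact ⟨hclosure, by rwa [← (Set.toFinite _).cast_ncard_eq, Nat.ofNat_le_cast] at hcard⟩
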